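/- Let H be the graph obtained from the complete bipartite graph K_{2,3} by subdividing every edge once. Then H is a partial 2-tree, and H has no outer-string representation: there is no assignment of an arc to each vertex of H such that the images of the arcs of distinct vertices intersect if and only if the vertices are adjacent, every intersection point of two arcs is a proper crossing, no point of ℝ² lies on the images of three distinct arcs, and every arc has at least one of its endpoints in the closure of the contour of the family of arcs. -/

import Mathlib

/-- An arc: an injective continuous map from `[0,1]` to `ℝ²`
(formalized as a map `ℝ → ℝ × ℝ` that is continuous and injective on `[0,1]`). -/
structure Arc where
  toFun : ℝ → ℝ × ℝ
  contOn : ContinuousOn toFun (Set.Icc 0 1)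
  injOn : Set.InjOn toFun (Set.Icc 0 1)

/-- The image of an arc. -/
def Arc.img (γ : Arc) : Set (ℝ × ℝ) := γ.toFun '' Set.Icc 0 1

/-- The endpoints of an arc. -/
def Arc.ends (γ : Arc) : Set (ℝ × ℝ) := {γ.toFun 0, γ.toFun 1}

/-- Two arcs cross properly at `q`: `q` is an interior point of both arcs, and there is
an open neighbourhood of `q` mapped homeomorphically onto the open unit disk with `q ↦ 0`,
taking the first arc to the horizontal diameter and the second to the vertical diameter. -/
def CrossesProperlyAt (γ₁ γ₂ : Arc) (q : ℝ × ℝ) : Prop :=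
  (∃ s ∈ Set.Ioo (0:ℝ) 1, γ₁.toFun s = q) ∧
  (∃ t ∈ Set.Ioo (0:ℝ) 1, γ₂.toFun t = q) ∧
  ∃ h : PartialHomeomorph (ℝ × ℝ) (ℝ × ℝ),
    q ∈ h.source ∧ h.target = Metric.ball (0 : ℝ × ℝ) 1 ∧ h q = 0 ∧
    h '' (h.source ∩ γ₁.img) = {z : ℝ × ℝ | z ∈ Metric.ball (0 : ℝ × ℝ) 1 ∧ z.2 = 0} ∧
    h '' (h.source ∩ γ₂.img) = {z : ℝ × ℝ | z ∈ Metric.ball (0 : ℝ × ℝ) 1 ∧ z.1 = 0}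

/-- A 1-string representation of a simple graph `G`. -/
structure OneStringRep {V : Type} (G : SimpleGraph V) where
  γ : V → Arc
  adj_inter : ∀ u v : V, G.Adj u v → ∃ q : ℝ × ℝ, (γ u).img ∩ (γ v).img = {q}
  nonadj_disjoint : ∀ u v : V, u ≠ v → ¬G.Adj u v → (γ u).img ∩ (γ v).img = ∅
  proper : ∀ u v : V, u ≠ v → ∀ q ∈ (γ u).img ∩ (γ v).img, CrossesProperlyAt (γ u) (γ v) q
  no_triple : ∀ u v w : V, u ≠ v → u ≠ w → v ≠ w → (γ u).img ∩ (γ v).img ∩ (γ w).img = ∅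

/-- A straight-line plane drawing of a simple graph. -/
def IsPlaneDrawing {V : Type} (G : SimpleGraph V) (p : V → ℝ × ℝ) : Prop :=
  Function.Injective p ∧
  (∀ u v x y : V, G.Adj u v → G.Adj x y → u ≠ x → u ≠ y → v ≠ x → v ≠ y →
    segment ℝ (p u) (p v) ∩ segment ℝ (p x) (p y) = ∅) ∧
  (∀ u v w : V, G.Adj u v → G.Adj u w → v ≠ w →
    segment ℝ (p u) (p v) ∩ segment ℝ (p u) (p w) = {p u}) ∧
  (∀ u v w : V, G.Adj u v → w ≠ u → w ≠ v → p w ∉ segment ℝ (p u) (p v))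

/-- The angle of the vector from `a` to `b`. -/
noncomputable def angleAt (a b : ℝ × ℝ) : ℝ := Complex.arg ⟨b.1 - a.1, b.2 - a.2⟩

/-- A 1-string representation is order-preserving w.r.t. a straight-line plane drawing `p`:
for each vertex `v`, listing the neighbours `w₁, …, w_k` sorted by the angle of `p wᵢ - p v`,
there are a traversal direction of `γ v` and a cyclic rotation of the list such that the
intersection points of `γ v` with the `γ wᵢ` occur along `γ v`, in that traversal direction,
exactly in the rotated order. -/
def OrderPreserving {V : Type} (G : SimpleGraph V) (p : V → ℝ × ℝ)
    (R : OneStringRep G) : Prop :=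
  ∀ v : V, ∃ l : List V,
    l.Nodup ∧ (∀ w : V, w ∈ l ↔ G.Adj v w) ∧
    l.Pairwise (fun w w' => angleAt (p v) (p w) < angleAt (p v) (p w')) ∧
    ∃ (r : ℕ) (dir : Bool) (t : V → ℝ),
      (∀ w ∈ l, t w ∈ Set.Icc (0:ℝ) 1 ∧ (R.γ v).toFun (t w) ∈ (R.γ w).img) ∧
      (l.rotate r).Pairwise (fun w w' => if dir then t w < t w' else t w' < t w)

/-- The union of the images of a family of arcs. -/
def arcUnion {V : Type} (γ : V → Arc) : Set (ℝ × ℝ) := ⋃ v, (γ v).img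

/-- The contour of a family of arcs: the unbounded connected component of the complement of
the union of the images (formalized as the union of all unbounded connected components). -/
def contour {V : Type} (γ : V → Arc) : Set (ℝ × ℝ) :=
  {x | x ∈ (arcUnion γ)ᶜ ∧ ¬ Bornology.IsBounded (connectedComponentIn (arcUnion γ)ᶜ x)}

/-- A `k`-tree: there is an ordering of the vertices such that the first `k` form a clique and
every later vertex has exactly `k` earlier neighbours, which form a clique. -/
def IsKTree {V : Type} (k : ℕ) (G : SimpleGraph V) : Prop :=
  ∃ (n : ℕ) (e : V ≃ Fin n), k ≤ n ∧
    G.IsClique {v : V | (e v).val < k} ∧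
    ∀ i : Fin n, k ≤ i.val →
      ∃ S : Finset V, S.card = k ∧
        (∀ w : V, w ∈ S ↔ G.Adj (e.symm i) w ∧ (e w).val < i.val) ∧
        G.IsClique ↑S

/-- An L-shape: an arc whose image is the union of a vertical segment from `(x, y+h)` to
`(x, y)` and a horizontal segment from `(x, y)` to `(x+w, y)` with `w, h > 0`. -/
def IsLShape (γ : Arc) : Prop :=
  ∃ x y w h : ℝ, 0 < w ∧ 0 < h ∧
    γ.img = segment ℝ (x, y + h) (x, y) ∪ segment ℝ (x, y) (x + w, y)

/-- A 1-bend orthogonal arc: its image is a single horizontal or vertical segment, or the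
union of a horizontal segment and a vertical segment sharing exactly one endpoint. -/
def IsOneBendOrth (γ : Arc) : Prop :=
  (∃ a b : ℝ × ℝ, a ≠ b ∧ (a.1 = b.1 ∨ a.2 = b.2) ∧ γ.img = segment ℝ a b) ∨
  (∃ a b c : ℝ × ℝ, a ≠ b ∧ b ≠ c ∧
    ((a.1 = b.1 ∧ b.2 = c.2) ∨ (a.2 = b.2 ∧ b.1 = c.1)) ∧
    γ.img = segment ℝ a b ∪ segment ℝ b c ∧ segment ℝ a b ∩ segment ℝ b c = {b})

/-- A graph is 2-connected if it has at least 3 vertices and deleting any single vertex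
leaves a connected graph. -/
def TwoConnected {V : Type} (G : SimpleGraph V) : Prop :=
  3 ≤ Nat.card V ∧ ∀ v : V, ((⊤ : G.Subgraph).deleteVerts {v}).coe.Connected

/-- A partial 2-tree: a graph isomorphic to a subgraph of some 2-tree. -/
def IsPartialTwoTree {V : Type} (G : SimpleGraph V) : Prop :=
  ∃ (W : Type) (H : SimpleGraph W), IsKTree 2 H ∧
    ∃ g : V ↪ W, ∀ u v : V, G.Adj u v → H.Adj (g u) (g v)

/-- The graph obtained from `K_{2,3}` by subdividing every edge once: the left part is `Fin 2`,
the right part is `Fin 3`, and for each pair `(i, j)` there is a subdivision vertex adjacent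
exactly to the left vertex `i` and the right vertex `j`. -/
def subdividedK23 : SimpleGraph (Fin 2 ⊕ Fin 3 ⊕ Fin 2 × Fin 3) :=
  SimpleGraph.fromRel (fun a b =>
    match a, b with
    | Sum.inl i, Sum.inr (Sum.inr (i', _)) => i = i'
    | Sum.inr (Sum.inl j), Sum.inr (Sum.inr (_, j')) => j = j'
    | _, _ => False)

theorem log2 (F : ℝ × ℝ → ℂ) (hF : Continuous F) (h0 : ∀ z, F z ≠ 0) :
    ∃ L : ℝ × ℝ → ℂ, Continuous L ∧ ∀ z, Complex.exp (L z) = F z := by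
  obtain ⟨f, ⟨-, hf⟩, -⟩ := Complex.isCoveringMapOn_exp.existsUnique_continuousMap_lifts
    (⟨F, hF⟩ : C(ℝ × ℝ, ℂ)) (a₀ := (0, 0)) (e₀ := Complex.log (F (0, 0)))
    (Complex.exp_log (h0 _)) (fun z => h0 z)
  exact ⟨f, f.continuous, fun z => congrFun hf z⟩

theorem log_const (L M : ℝ → ℂ) (hL : Continuous L) (hM : Continuous M) (c : ℂ)
    (h : ∀ t, Complex.exp (L t) = c * Complex.exp (M t)) :
    L 1 - L 0 = M 1 - M 0 := by
  obtain ⟨f, -, hf⟩ := Complex.isCoveringMapOn_exp.existsUnique_continuousMap_lifts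
    (⟨fun t => Complex.exp (L t), by fun_prop⟩ : C(ℝ, ℂ)) (a₀ := 0) (e₀ := L 0)
    rfl (fun z => Complex.exp_ne_zero _)
  have h1 := hf ⟨L, hL⟩ ⟨rfl, rfl⟩
  have h2 := hf ⟨fun t => M t + (L 0 - M 0), by fun_prop⟩ ⟨by simp, by
    funext t
    simp only [Function.comp, ContinuousMap.coe_mk, Complex.exp_add, Complex.exp_sub, h]
    have := Complex.exp_ne_zero (M 0)
    field_simp⟩
  have h3 := congrArg (fun g : C(ℝ, ℂ) => g 1) (h1.trans h2.symm)
  simp only [ContinuousMap.coe_mk] at h3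
  rw [h3]; ring

/-- log change of `g - p` from 0 to 1 -/
noncomputable def dlog (p : ℂ) (g : ℝ → ℂ) : ℂ :=
  open Classical in
  if h : ∃ L : ℝ → ℂ, Continuous L ∧ ∀ t, Complex.exp (L t) = g t - p then
    h.choose 1 - h.choose 0 else 0

theorem dlog_eq (p : ℂ) (g : ℝ → ℂ) (c : ℂ) (hc : c ≠ 0) (L : ℝ → ℂ) (hL : Continuous L)
    (h : ∀ t, Complex.exp (L t) = c * (g t - p)) : dlog p g = L 1 - L 0 := by
  have hex : ∃ L : ℝ → ℂ, Continuous L ∧ ∀ t, Complex.exp (L t) = g t - p := by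
    refine ⟨fun t => L t - Complex.log c, by fun_prop, fun t => ?_⟩
    rw [Complex.exp_sub, Complex.exp_log hc, h]
    field_simp
  rw [dlog, dif_pos hex]
  symm
  refine log_const _ _ hL hex.choose_spec.1 c fun t => ?_
  rw [h, hex.choose_spec.2]

theorem dlog_rel (e f : ℝ → ℂ) (he : Continuous e) (hf : Continuous f)
    (h : ∀ s t, e s ≠ f t) :
    dlog (e 0) f - dlog (e 1) f = dlog (f 0) e - dlog (f 1) e := by
  obtain ⟨L, hL, hLe⟩ := log2 (fun z => f z.2 - e z.1) (by fun_prop)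
    (fun z => sub_ne_zero.2 (h _ _).symm)
  rw [dlog_eq (e 0) f 1 one_ne_zero (fun t => L (0, t)) (by fun_prop) (by simp [hLe]),
    dlog_eq (e 1) f 1 one_ne_zero (fun t => L (1, t)) (by fun_prop) (by simp [hLe]),
    dlog_eq (f 0) e (-1) (by simp) (fun t => L (t, 0)) (by fun_prop) (by simp [hLe]),
    dlog_eq (f 1) e (-1) (by simp) (fun t => L (t, 1)) (by fun_prop) (by simp [hLe])]
  ring

theorem dlog_exp (p : ℂ) (g : ℝ → ℂ) (hg : Continuous g) (h : ∀ t, g t ≠ p) :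
    Complex.exp (dlog p g) = (g 1 - p) / (g 0 - p) := by
  obtain ⟨L, hL, hLe⟩ := log2 (fun z => g z.1 - p) (by fun_prop)
    (fun z => sub_ne_zero.2 (h _))
  rw [dlog_eq p g 1 one_ne_zero (fun t => L (t, 0)) (by fun_prop) (by simp [hLe]),
    Complex.exp_sub, hLe, hLe]

theorem k33 (a b : Fin 3 → ℂ) (P : Fin 3 → Fin 3 → ℝ → ℂ) (hP : ∀ i j, Continuous (P i j))
    (h0 : ∀ i j, P i j 0 = a i) (h1 : ∀ i j, P i j 1 = b j)
    (hd : ∀ i i' j j', i ≠ i' → j ≠ j' → ∀ s t, P i j s ≠ P i' j' t) : False := by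
  have oth : ∀ i : Fin 3, ∃ k, k ≠ i := by decide
  have hab : ∀ i j, b j - a i ≠ 0 := by
    intro i j
    obtain ⟨i', hi⟩ := oth i
    obtain ⟨j', hj⟩ := oth j
    rw [← h0 i j', ← h1 i' j]
    exact sub_ne_zero.2 (hd _ _ _ _ hi hj.symm _ _)
  have haa : ∀ i i', i ≠ i' → a i' - a i ≠ 0 := by
    intro i i' h
    rw [← h0 i 0, ← h0 i' 1]
    exact sub_ne_zero.2 (hd _ _ _ _ h.symm (by decide) _ _)
  have hbb : ∀ i i', i ≠ i' → b i' - b i ≠ 0 := by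
    intro i i' h
    rw [← h1 0 i, ← h1 1 i']
    exact sub_ne_zero.2 (hd _ _ _ _ (by decide) h.symm _ _)
  set al : Fin 3 → Fin 3 → ℂ := fun i j => Complex.log (b j - a i) with hal
  set be : Fin 3 → Fin 3 → ℂ := fun i j => Complex.log (a (max i j) - a (min i j)) with hbe
  set ga : Fin 3 → Fin 3 → ℂ := fun i j => Complex.log (b (max i j) - b (min i j)) with hga
  have bes : ∀ i j, be i j = be j i := fun i j => by simp only [hbe, max_comm, min_comm]
  have gas : ∀ i j, ga i j = ga j i := fun i j => by simp only [hga, max_comm, min_comm]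
  have key : ∀ x y : ℂ, Complex.exp x = Complex.exp y → ∃ n : ℤ, x = y + n * (2 * Real.pi * Complex.I) :=
    fun x y h => Complex.exp_eq_exp_iff_exists_int.1 h
  have hA : ∀ i i' j, i ≠ i' → ∃ n : ℤ, dlog (a i) (P i' j) =
      al i j - be i i' + (if i' < i then 1 else 0) * (Real.pi * Complex.I) + n * (2 * Real.pi * Complex.I) := by
    intro i i' j h
    apply key
    rw [dlog_exp _ _ (hP _ _)]
    · rw [h0, h1, Complex.exp_add, Complex.exp_sub, Complex.exp_log (hab _ _)]
      split_ifs with hlt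
      · simp only [hbe]
        rw [max_eq_left hlt.le, min_eq_right hlt.le, Complex.exp_log (haa _ _ h.symm), one_mul,
          Complex.exp_pi_mul_I]
        have := haa _ _ h
        have := haa _ _ h.symm
        field_simp
        ring
      · simp only [hbe]
        have hlt := not_lt.1 hlt
        rw [max_eq_right hlt, min_eq_left hlt, Complex.exp_log (haa _ _ h), zero_mul,
          Complex.exp_zero, mul_one]
    · intro t
      obtain ⟨j', hj⟩ := oth j
      rw [← h0 i j']
      exact hd _ _ _ _ h.symm hj.symm _ _
  have hB : ∀ i j j', j ≠ j' → ∃ n : ℤ, dlog (b j) (P i j') =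
      ga j j' - al i j + (if j' < j then 0 else 1) * (Real.pi * Complex.I) + n * (2 * Real.pi * Complex.I) := by
    intro i j j' h
    apply key
    rw [dlog_exp _ _ (hP _ _)]
    · rw [h0, h1, Complex.exp_add, Complex.exp_sub, Complex.exp_log (hab _ _)]
      have hh := hab i j
      have hh' : a i - b j ≠ 0 := by rw [← neg_sub]; exact neg_ne_zero.2 hh
      split_ifs with hlt
      · simp only [hga]
        rw [max_eq_left hlt.le, min_eq_right hlt.le, Complex.exp_log (hbb _ _ h.symm), zero_mul,
          Complex.exp_zero]
        field_simp
        ring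
      · simp only [hga]
        have hlt := not_lt.1 hlt
        rw [max_eq_right hlt, min_eq_left hlt, Complex.exp_log (hbb _ _ h), one_mul,
          Complex.exp_pi_mul_I]
        field_simp
        ring
    · intro t
      obtain ⟨i', hi⟩ := oth i
      rw [← h1 i' j]
      exact hd _ _ _ _ hi.symm h.symm _ _
  choose! nA hA using hA
  choose! nB hB using hB
  have rel : ∀ i i' j j', i < i' → j ≠ j' →
      nA i i' j' - nB i' j j' = nA i' i j - nB i j' j + (if j < j' then 1 else 0) := by
    intro i i' j j' hi hj
    have h := dlog_rel (P i j) (P i' j') (hP _ _) (hP _ _) (hd _ _ _ _ hi.ne hj)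
    rw [h0, h0, h1, h1, hA _ _ _ hi.ne, hA _ _ _ hi.ne', hB _ _ _ hj, hB _ _ _ hj.symm,
      bes i' i, gas j' j, if_neg hi.not_gt, if_pos hi] at h
    have hpi : (2 * Real.pi * Complex.I : ℂ) ≠ 0 := Complex.two_pi_I_ne_zero
    rcases lt_or_gt_of_ne hj with hlt | hlt
    · rw [if_neg hlt.not_gt, if_pos hlt] at h
      rw [if_pos hlt]
      have : ((nA i i' j' - nB i' j j' : ℤ) : ℂ) = ((nA i' i j - nB i j' j + 1 : ℤ) : ℂ) := by
        apply mul_right_cancel₀ hpi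
        push_cast
        linear_combination h
      exact_mod_cast this
    · rw [if_pos hlt, if_neg hlt.not_gt] at h
      rw [if_neg hlt.not_gt]
      have : ((nA i i' j' - nB i' j j' : ℤ) : ℂ) = ((nA i' i j - nB i j' j + 0 : ℤ) : ℂ) := by
        apply mul_right_cancel₀ hpi
        push_cast
        linear_combination h
      exact_mod_cast this
  have H : ∀ i i', i < i' → 
      2 * (nA i i' 0 + nA i i' 1 + nA i i' 2) - (nB i' 0 1 + nB i' 0 2 + nB i' 1 0 + nB i' 1 2 + nB i' 2 0 + nB i' 2 1)
      = 2 * (nA i' i 0 + nA i' i 1 + nA i' i 2) - (nB i 0 1 + nB i 0 2 + nB i 1 0 + nB i 1 2 + nB i 2 0 + nB i 2 1) + 3 := by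
    intro i i' h
    have r1 := rel i i' 0 1 h (by decide)
    have r2 := rel i i' 0 2 h (by decide)
    have r3 := rel i i' 1 2 h (by decide)
    have r4 := rel i i' 1 0 h (by decide)
    have r5 := rel i i' 2 0 h (by decide)
    have r6 := rel i i' 2 1 h (by decide)
    rw [if_pos (by decide)] at r1 r2 r3
    rw [if_neg (by decide)] at r4 r5 r6
    linarith
  have H1 := H 0 1 (by decide)
  have H2 := H 0 2 (by decide)
  have H3 := H 1 2 (by decide)
  omega

theorem k33_joined (a b : Fin 3 → ℝ × ℝ) (S : Fin 3 → Fin 3 → Set (ℝ × ℝ))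
    (hJ : ∀ i j, JoinedIn (S i j) (a i) (b j))
    (hd : ∀ i i' j j', i ≠ i' → j ≠ j' → Disjoint (S i j) (S i' j')) : False := by
  choose p hp using hJ
  refine k33 (fun i => Complex.equivRealProdCLM.symm (a i))
    (fun i => Complex.equivRealProdCLM.symm (b i))
    (fun i j t => Complex.equivRealProdCLM.symm ((p i j).extend t)) ?_ ?_ ?_ ?_
  · intro i j
    exact Complex.equivRealProdCLM.symm.continuous.comp (p i j).continuous_extend
  · intro i j; simp
  · intro i j; simp
  · intro i i' j j' hi hj s t h
    have h := Complex.equivRealProdCLM.symm.injective h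
    refine Set.disjoint_left.1 (hd i i' j j' hi hj) (hp i j (Set.projIcc 0 1 zero_le_one s)) ?_
    have : p i j (Set.projIcc 0 1 zero_le_one s) = p i' j' (Set.projIcc 0 1 zero_le_one t) := h
    rw [this]
    exact hp _ _ _

theorem exterior_pc (R : ℝ) (hR : 0 < R) : IsPathConnected {z : ℝ × ℝ | R < ‖z‖} := by
  have h : IsPathConnected ({0}ᶜ : Set (ℝ × ℝ)) :=
    isPathConnected_compl_singleton_of_one_lt_rank (by
      rw [← Module.finrank_eq_rank]; simp) 0
  have hc : ContinuousOn (fun z : ℝ × ℝ => (1 + R / ‖z‖) • z) ({0}ᶜ) := by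
    refine ContinuousOn.smul (continuousOn_const.add (continuousOn_const.div
      continuous_norm.continuousOn ?_)) continuousOn_id
    intro x hx
    exact norm_ne_zero_iff.2 hx
  convert h.image' hc using 1
  ext y
  simp only [Set.mem_setOf_eq, Set.mem_image, Set.mem_compl_iff, Set.mem_singleton_iff]
  constructor
  · intro hy
    have hy0 : 0 < ‖y‖ := hR.trans hy
    have hlt : 0 < 1 - R / ‖y‖ := by rw [sub_pos, div_lt_one hy0]; exact hy
    refine ⟨(1 - R / ‖y‖) • y, smul_ne_zero hlt.ne' (norm_pos_iff.1 hy0), ?_⟩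
    rw [norm_smul, Real.norm_of_nonneg hlt.le, smul_smul]
    have : (1 + R / ((1 - R / ‖y‖) * ‖y‖)) * (1 - R / ‖y‖) = 1 := by
      have : ‖y‖ - R ≠ 0 := by linarith
      have e : (1 - R / ‖y‖) * ‖y‖ = ‖y‖ - R := by field_simp
      rw [e]
      field_simp
      ring
    rw [this, one_smul]
  · rintro ⟨x, hx, rfl⟩
    have hx0 : 0 < ‖x‖ := norm_pos_iff.2 hx
    have : 0 < R / ‖x‖ := by positivity
    rw [norm_smul, Real.norm_of_nonneg (by linarith), add_mul, div_mul_cancel₀ _ hx0.ne']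
    linarith

theorem Arc.img_compact (g : Arc) : IsCompact g.img := isCompact_Icc.image_of_continuousOn g.contOn

theorem Arc.img_pc (g : Arc) : IsPathConnected g.img :=
  ((convex_Icc (0:ℝ) 1).isPathConnected ⟨0, by simp⟩).image' g.contOn

theorem contour_joined {V : Type} [Finite V] (γ : V → Arc) :
    ∃ z, ∀ x ∈ contour γ, JoinedIn (arcUnion γ)ᶜ z x := by
  have hK : IsCompact (arcUnion γ) := isCompact_iUnion fun v => (γ v).img_compact
  obtain ⟨R, hR, hKR⟩ := hK.isBounded.exists_pos_norm_le
  have hE := exterior_pc R hR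
  have hEK : {z : ℝ × ℝ | R < ‖z‖} ⊆ (arcUnion γ)ᶜ := fun z hz hz' =>
    absurd (hKR z hz') (not_le.2 hz)
  obtain ⟨z, hz⟩ := hE.nonempty
  refine ⟨z, fun x hx => ?_⟩
  obtain ⟨hx1, hx2⟩ := hx
  set C := connectedComponentIn (arcUnion γ)ᶜ x with hC
  have hCo : IsOpen C := hK.isClosed.isOpen_compl.connectedComponentIn
  have hCc : IsConnected C := isConnected_connectedComponentIn_iff.2 hx1
  have hCp := hCo.isConnected_iff_isPathConnected.1 hCc
  have : ∃ y ∈ C, R < ‖y‖ := by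
    by_contra hcon
    push Not at hcon
    exact hx2 (isBounded_iff_forall_norm_le.2 ⟨R, hcon⟩)
  obtain ⟨y, hyC, hy⟩ := this
  exact ((hE.joinedIn z hz y hy).mono hEK).trans
    ((hCp.joinedIn y hyC x (mem_connectedComponentIn hx1)).mono (connectedComponentIn_subset _ _))

theorem end_joined {V : Type} [Finite V] (γ : V → Arc) (v : V) (p : ℝ × ℝ)
    (hp : p ∈ closure (contour γ)) (hpv : ∀ w, w ≠ v → p ∉ (γ w).img) :
    ∃ x ∈ contour γ, JoinedIn ((arcUnion γ)ᶜ ∪ (γ v).img) x p := by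
  have hcl : IsClosed (⋃ w : {w // w ≠ v}, (γ w).img) :=
    isClosed_iUnion_of_finite fun w => (γ w).img_compact.isClosed
  have hpn : p ∈ (⋃ w : {w // w ≠ v}, (γ w).img)ᶜ := by
    simp only [Set.mem_compl_iff, Set.mem_iUnion, not_exists]
    exact fun w => hpv w w.2
  obtain ⟨ε, hε, hb⟩ := Metric.isOpen_iff.1 hcl.isOpen_compl p hpn
  obtain ⟨x, hx, hxb⟩ := Metric.mem_closure_iff.1 hp ε hε
  refine ⟨x, hx, ?_⟩
  refine (((convex_ball p ε).isPathConnected ⟨p, Metric.mem_ball_self hε⟩).joinedIn x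
    (by rw [Metric.mem_ball, dist_comm]; exact hxb) p (Metric.mem_ball_self hε)).mono ?_
  intro y hy
  by_cases hyv : y ∈ (γ v).img
  · exact Or.inr hyv
  · left
    simp only [arcUnion, Set.mem_compl_iff, Set.mem_iUnion, not_exists]
    intro w hw
    by_cases h : w = v
    · exact hyv (h ▸ hw)
    · exact hb hy (Set.mem_iUnion.2 ⟨⟨w, h⟩, hw⟩)

/-- parents in the 2-tree -/
def par : Fin 11 → Finset (Fin 11)
  | 0 => ∅
  | 1 => {0}
  | 2 => {0, 1}
  | 3 => {0, 1}
  | 4 => {0, 1}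
  | 5 => {0, 2}
  | 6 => {0, 3}
  | 7 => {0, 4}
  | 8 => {1, 2}
  | 9 => {1, 3}
  | 10 => {1, 4}

def bigT : SimpleGraph (Fin 11) := SimpleGraph.fromRel (fun a b => b ∈ par a)

instance : DecidableRel bigT.Adj := fun a b =>
  decidable_of_iff (a ≠ b ∧ (b ∈ par a ∨ a ∈ par b)) Iff.rfl

def embT : (Fin 2 ⊕ Fin 3 ⊕ Fin 2 × Fin 3) → Fin 11
  | Sum.inl i => ⟨i, by omega⟩
  | Sum.inr (Sum.inl j) => ⟨2 + j, by omega⟩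
  | Sum.inr (Sum.inr (i, j)) => ⟨5 + 3 * i + j, by omega⟩

theorem partialT : IsPartialTwoTree subdividedK23 := by
  refine ⟨Fin 11, bigT, ⟨11, Equiv.refl _, by norm_num, ?_, ?_⟩, ⟨embT, ?_⟩, ?_⟩
  · have : ∀ x y : Fin 11, x.val < 2 → y.val < 2 → x ≠ y → bigT.Adj x y := by decide
    exact fun x hx y hy h => this x y hx hy h
  · intro i hi
    refine ⟨par i, ?_, ?_, ?_⟩
    · revert i; decide
    · have : ∀ i w : Fin 11, 2 ≤ i.val → (w ∈ par i ↔ bigT.Adj i w ∧ w.val < i.val) := by decide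
      exact fun w => this i w hi
    · have : ∀ i : Fin 11, ∀ x ∈ par i, ∀ y ∈ par i, x ≠ y → bigT.Adj x y := by decide
      exact fun x hx y hy h => this i x hx y hy h
  · have : ∀ x y, embT x = embT y → x = y := by decide
    exact fun x y h => this x y h
  · rintro (i | j | ⟨i, j⟩) (i' | j' | ⟨i', j'⟩) ⟨hne, h⟩ <;> simp at h <;> clear hne <;> subst h
    · revert i j'; decide
    · revert j i'; decide
    · revert i' j; decide
    · revert i j'; decide

theorem arms {A B C : Set (ℝ × ℝ)} (hA : IsPathConnected A) (hB : IsPathConnected B)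
    (hC : IsPathConnected C) (hAC : (A ∩ C).Nonempty) (hBC : (B ∩ C).Nonempty)
    {x y : ℝ × ℝ} (hx : x ∈ A) (hy : y ∈ B) : JoinedIn (A ∪ C ∪ B) x y := by
  have h1 := hA.union hC hAC
  have h2 := h1.union hB (by
    obtain ⟨z, hz, hz'⟩ := hBC
    exact ⟨z, Or.inr hz', hz⟩)
  exact h2.joinedIn x (Or.inl (Or.inl hx)) y (Or.inr hy)

theorem no_rep : ¬ ∃ γ : (Fin 2 ⊕ Fin 3 ⊕ Fin 2 × Fin 3) → Arc,
        (∀ u v, u ≠ v →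
          (((γ u).img ∩ (γ v).img).Nonempty ↔ subdividedK23.Adj u v)) ∧
        (∀ u v, u ≠ v → ∀ q ∈ (γ u).img ∩ (γ v).img,
          CrossesProperlyAt (γ u) (γ v) q) ∧
        (∀ u v w, u ≠ v → u ≠ w → v ≠ w →
          (γ u).img ∩ (γ v).img ∩ (γ w).img = ∅) ∧
        (∀ v, (γ v).toFun 0 ∈ closure (contour γ) ∨
          (γ v).toFun 1 ∈ closure (contour γ)) := by
  rintro ⟨γ, hadj, hcr, -, hout⟩
  have hdis : ∀ u v, u ≠ v → ¬ subdividedK23.Adj u v → Disjoint (γ u).img (γ v).img := by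
    intro u v h1 h2
    rw [Set.disjoint_iff_inter_eq_empty, ← Set.not_nonempty_iff_eq_empty, hadj u v h1]
    exact h2
  have hend : ∀ v, ∃ p ∈ (γ v).img, p ∈ closure (contour γ) ∧ ∀ w, w ≠ v → p ∉ (γ w).img := by
    intro v
    have aux : ∀ e ∈ Set.Icc (0:ℝ) 1, e ∉ Set.Ioo (0:ℝ) 1 → ∀ w, w ≠ v →
        (γ v).toFun e ∉ (γ w).img := by
      intro e he he' w hw hmem
      obtain ⟨⟨s, hs, hse⟩, -⟩ := hcr v w hw.symm _ ⟨⟨e, he, rfl⟩, hmem⟩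
      have := (γ v).injOn ⟨hs.1.le, hs.2.le⟩ he hse
      exact he' (this ▸ hs)
    rcases hout v with h | h
    · exact ⟨_, ⟨0, by simp, rfl⟩, h, aux 0 (by simp) (by simp)⟩
    · exact ⟨_, ⟨1, by simp, rfl⟩, h, aux 1 (by simp) (by simp)⟩
  choose p hpv hpc hpn using hend
  obtain ⟨z, hz⟩ := contour_joined γ
  let A : Fin 2 → Set (ℝ × ℝ) := fun i => (γ (Sum.inl i)).img
  let B : Fin 3 → Set (ℝ × ℝ) := fun i => (γ (Sum.inr (Sum.inl i))).img
  let C : Fin 2 → Fin 3 → Set (ℝ × ℝ) := fun i j => (γ (Sum.inr (Sum.inr (i, j)))).img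
  have hAA : ∀ i i', i ≠ i' → Disjoint (A i) (A i') := fun i i' h =>
    hdis _ _ (by simpa using h) (by simp [subdividedK23])
  have hBB : ∀ i i', i ≠ i' → Disjoint (B i) (B i') := fun i i' h =>
    hdis _ _ (by simpa using h) (by simp [subdividedK23])
  have hAB : ∀ i j, Disjoint (A i) (B j) := fun i i' =>
    hdis _ _ (by simp) (by simp [subdividedK23])
  have hAC : ∀ i i' j, i ≠ i' → Disjoint (A i) (C i' j) := fun i i' j h =>
    hdis _ _ (by simp) (by simpa [subdividedK23] using h)
  have hBC : ∀ i j j', j ≠ j' → Disjoint (B j) (C i j') := fun i i' j h =>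
    hdis _ _ (by simp) (by simpa [subdividedK23] using h)
  have hCC : ∀ i i' j j', i ≠ i' → Disjoint (C i j) (C i' j') := fun i i' j j' h =>
    hdis _ _ (by simp [h]) (by simp [subdividedK23])
  have hU : ∀ v, Disjoint ((arcUnion γ)ᶜ) (γ v).img := fun v =>
    Set.disjoint_left.2 fun x hx hx' => hx (Set.mem_iUnion.2 ⟨v, hx'⟩)
  have hAC' : ∀ i j, (A i ∩ C i j).Nonempty := fun i j =>
    (hadj _ _ (by simp)).2 (by simp [subdividedK23])
  have hBC' : ∀ i j, (B j ∩ C i j).Nonempty := fun i j =>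
    (hadj _ _ (by simp)).2 (by simp [subdividedK23])
  let S : Fin 3 → Fin 3 → Set (ℝ × ℝ) :=
    fun i j => Fin.cons (α := fun _ => Set (ℝ × ℝ)) ((arcUnion γ)ᶜ ∪ B j) (fun i : Fin 2 => A i ∪ C i j ∪ B j) i
  refine k33_joined (Fin.cons (α := fun _ => ℝ × ℝ) z (fun i : Fin 2 => p (Sum.inl i)))
    (fun j => p (Sum.inr (Sum.inl j))) S ?_ ?_
  · intro i j
    refine Fin.cases ?_ (fun i => ?_) i
    · simp only [S, Fin.cons_zero]
      obtain ⟨x, hx, hxp⟩ := end_joined γ _ _ (hpc (Sum.inr (Sum.inl j))) (hpn _)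
      exact ((hz x hx).mono Set.subset_union_left).trans hxp
    · simp only [S, Fin.cons_succ]
      exact arms (Arc.img_pc _) (Arc.img_pc _) (Arc.img_pc _) (hAC' i j) (hBC' i j) (hpv _) (hpv _)
  · have h0 : ∀ i j j', j ≠ j' →
        Disjoint ((arcUnion γ)ᶜ ∪ B j) (A i ∪ C i j' ∪ B j') := by
      intro i j j' h
      simp only [Set.disjoint_union_left, Set.disjoint_union_right]
      refine ⟨⟨⟨hU _, ?_⟩, ⟨hU _, ?_⟩⟩, ⟨hU _, ?_⟩⟩
      exacts [(hAB i j).symm, hBC _ _ _ h, hBB _ _ h]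
    intro i i' j j'
    refine Fin.cases ?_ (fun i => ?_) i <;> refine Fin.cases ?_ (fun i' => ?_) i' <;> intro hi hj <;>
      simp only [S, Fin.cons_zero, Fin.cons_succ]
    · exact absurd rfl hi
    · exact h0 _ _ _ hj
    · exact (h0 _ _ _ hj.symm).symm
    · have hi : i ≠ i' := fun h => hi (by rw [h])
      simp only [Set.disjoint_union_left, Set.disjoint_union_right]
      refine ⟨⟨⟨⟨?_, ?_⟩, ?_⟩, ⟨⟨?_, ?_⟩, ?_⟩⟩, ⟨⟨?_, ?_⟩, ?_⟩⟩
      exacts [hAA _ _ hi, (hAC _ _ _ hi.symm).symm, (hAB _ _).symm, hAC _ _ _ hi,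
        hCC _ _ _ _ hi, hBC _ _ _ hj, hAB _ _, (hBC _ _ _ hj.symm).symm, hBB _ _ hj]

/-- The subdivided `K_{2,3}` is a partial 2-tree, but it has no outer-string representation:
there is no assignment of arcs to the vertices with images intersecting iff the vertices are
adjacent, all intersections proper crossings, no triple points, and every arc having at least
one endpoint in the closure of the contour. -/
theorem stmt_10 :
    IsPartialTwoTree subdividedK23 ∧
    ¬ ∃ γ : (Fin 2 ⊕ Fin 3 ⊕ Fin 2 × Fin 3) → Arc,
        (∀ u v, u ≠ v →
          (((γ u).img ∩ (γ v).img).Nonempty ↔ subdividedK23.Adj u v)) ∧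
        (∀ u v, u ≠ v → ∀ q ∈ (γ u).img ∩ (γ v).img,
          CrossesProperlyAt (γ u) (γ v) q) ∧
        (∀ u v w, u ≠ v → u ≠ w → v ≠ w →
          (γ u).img ∩ (γ v).img ∩ (γ w).img = ∅) ∧
        (∀ v, (γ v).toFun 0 ∈ closure (contour γ) ∨
          (γ v).toFun 1 ∈ closure (contour γ)) := by
  exact ⟨partialT, no_rep⟩
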